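/- arXiv:1406.5361 — 3 statements merged into one kernel-verified Lean document; each statement's English description precedes it below -/
import Mathlib

section
/- Let k be a field of characteristic zero, P = k[x,y,z,t], and S = k[x,y,z] ⊆ P. Let I ⊆ P be a homogeneous ideal, let d ≥ 1, and let ℓ ∈ S_1 be a linear form in x, y, z only that is a nonzerodivisor on P/I. Assume that for every f in the degree-d component I_d one has ℓ·(∂f/∂t) ∈ I_d. Then for every f ∈ I_d, writing f = f^0 + t·f^1 + ⋯ + t^d·f^d with f^i ∈ S_{d-i}, the t-free part f^0 (i.e., f with t replaced by 0) also belongs to I_d. -/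
open MvPolynomial


theorem coeff_euler {k : Type*} [Field k] (f : MvPolynomial (Fin 4) k) (m : Fin 4 →₀ ℕ) :
    coeff m (X 3 * pderiv (3 : Fin 4) f) = (m 3 : k) * coeff m f := by
  induction f using MvPolynomial.induction_on' with
  | monomial u a =>
    have h := X_mul_pderiv_monomial (R := k) (i := (3 : Fin 4)) (m := u) (r := a)
    rw [h, coeff_smul, coeff_monomial]
    split_ifs with h
    · subst h; simp
    · simp
  | add p q hp hq => rw [map_add, mul_add, coeff_add, hp, hq, coeff_add, mul_add]

theorem coeff_tzero {k : Type*} [Field k] (f : MvPolynomial (Fin 4) k) (m : Fin 4 →₀ ℕ) :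
    coeff m (aeval (fun i : Fin 4 => if i = 3 then (0 : MvPolynomial (Fin 4) k) else X i) f)
      = if m 3 = 0 then coeff m f else 0 := by
  induction f using MvPolynomial.induction_on' with
  | monomial u a =>
    rw [aeval_monomial]
    by_cases hu : u 3 = 0
    · have : (u.prod fun i n => (if i = 3 then (0 : MvPolynomial (Fin 4) k) else X i) ^ n)
          = u.prod fun i n => X i ^ n := by
        apply Finsupp.prod_congr
        intro i hi
        have : i ≠ 3 := by rintro rfl; simp [hu] at hi
        simp [this]
      rw [this, algebraMap_eq, ← monomial_eq, coeff_monomial]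
      split_ifs with h1 h2 h2
      · rfl
      · subst h1; exact absurd hu h2
      · rfl
      · rfl
    · have : (u.prod fun i n => (if i = 3 then (0 : MvPolynomial (Fin 4) k) else X i) ^ n) = 0 := by
        apply Finset.prod_eq_zero (i := 3)
        · simpa using hu
        · simp [hu]
      rw [this, mul_zero, coeff_zero, coeff_monomial]
      split_ifs with h1 h2 h2
      · subst h2; exact absurd h1 hu
      · rfl
      · rfl
  | add p q hp hq => rw [map_add, coeff_add, hp, hq, coeff_add]; split_ifs <;> simp

/-- Let `P = k[x,y,z,t]` (char `k` = 0), `I ⊆ P` a homogeneous ideal,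
`d ≥ 1`, and let `ℓ` be a linear form in `x, y, z` only (variables `0, 1, 2`) which is a
nonzerodivisor on `P/I`.  If `ℓ·(∂f/∂t) ∈ I_d` for every `f ∈ I_d`, then for every
`f ∈ I_d` the `t`-free part `f⁰` (i.e. `f` with `t` replaced by `0`) also lies in `I_d`.
Here the variable `t` is `X 3`. -/
theorem stmt_1 {k : Type*} [Field k] [CharZero k]
    (I : Ideal (MvPolynomial (Fin 4) k))
    (hIhom : ∀ f ∈ I, ∀ n : ℕ, homogeneousComponent n f ∈ I)
    (d : ℕ) (hd : 1 ≤ d)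
    (ℓ : MvPolynomial (Fin 4) k)
    (hℓ1 : ℓ ∈ homogeneousSubmodule (Fin 4) k 1)
    (hℓt : (3 : Fin 4) ∉ ℓ.vars)
    (hreg : ∀ g : MvPolynomial (Fin 4) k, ℓ * g ∈ I → g ∈ I)
    (hder : ∀ f ∈ I, f ∈ homogeneousSubmodule (Fin 4) k d →
      ℓ * pderiv (3 : Fin 4) f ∈ I) :
    ∀ f ∈ I, f ∈ homogeneousSubmodule (Fin 4) k d →
      aeval (fun i : Fin 4 => if i = 3 then (0 : MvPolynomial (Fin 4) k) else X i) f ∈ I ∧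
      aeval (fun i : Fin 4 => if i = 3 then (0 : MvPolynomial (Fin 4) k) else X i) f ∈
        homogeneousSubmodule (Fin 4) k d := by
  intro f hf hfd
  have key : ∀ n : ℕ, ∃ g ∈ I, g ∈ homogeneousSubmodule (Fin 4) k d ∧
      ∀ m, coeff m g = (∏ j ∈ Finset.range n, (1 - (m 3 : k) / ((j : k) + 1))) * coeff m f := by
    intro n
    induction n with
    | zero => exact ⟨f, hf, hfd, by simp⟩
    | succ n ih =>
      obtain ⟨g, hg, hgd, hc⟩ := ih
      have hE : X 3 * pderiv (3 : Fin 4) g ∈ I := I.mul_mem_left _ (hreg _ (hder g hg hgd))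
      have hEd : X 3 * pderiv (3 : Fin 4) g ∈ homogeneousSubmodule (Fin 4) k d := by
        rw [mem_homogeneousSubmodule] at hgd ⊢
        intro m hm
        rw [coeff_euler] at hm
        exact hgd (right_ne_zero_of_mul hm)
      refine ⟨g - C (((n : k) + 1)⁻¹) * (X 3 * pderiv (3 : Fin 4) g),
        I.sub_mem hg (I.mul_mem_left _ hE), ?_, ?_⟩
      · rw [← smul_eq_C_mul]
        exact Submodule.sub_mem _ hgd (Submodule.smul_mem _ _ hEd)
      · intro m
        rw [coeff_sub, coeff_C_mul, coeff_euler, hc, Finset.prod_range_succ]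
        ring
  obtain ⟨g, hg, hgd, hc⟩ := key d
  have heq : aeval (fun i : Fin 4 => if i = 3 then (0 : MvPolynomial (Fin 4) k) else X i) f
      = g := by
    ext m
    rw [coeff_tzero, hc]
    split_ifs with h
    · simp [h]
    · by_cases hm : coeff m f = 0
      · simp [hm]
      · have hdeg : m.degree = d := by
          have := (mem_homogeneousSubmodule d f).1 hfd hm
          rwa [Finsupp.degree_eq_weight_one]
        have hle : m 3 ≤ d := hdeg ▸ Finsupp.le_degree 3 m
        rw [Finset.prod_eq_zero (i := m 3 - 1), zero_mul]
        · rw [Finset.mem_range]; omega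
        · obtain ⟨j, hj⟩ := Nat.exists_eq_succ_of_ne_zero h
          have : (j : k) + 1 ≠ 0 := by exact_mod_cast Nat.succ_ne_zero j
          rw [hj]
          simp [div_self this]
  rw [heq]
  exact ⟨hg, hgd⟩
end

section
/- Let k be a field of characteristic zero, S = k[x,y,z,t], and d ≥ 1. Suppose ψ : S_d → S_d is a k-linear endomorphism such that for all linearly independent linear forms ℓ, h ∈ S_1 one has ψ(ℓ·S_{d-1} + h·S_{d-1}) ⊆ ℓ·S_{d-1} + h·S_{d-1}. Then there is a scalar α ∈ k such that ψ(f) = α·f for all f ∈ S_d. -/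
open MvPolynomial

/-- The functional relation on monomials, by induction on the degree. -/
lemma aux_monomial {k : Type*} [Field k] (d : ℕ) (p : Fin 4 → k)
    (F : MvPolynomial (Fin 4) k →ₗ[k] k)
    (hF : ∀ i, ∀ g : MvPolynomial (Fin 4) k, g.IsHomogeneous (d - 1) →
      p 0 * F (X i * g) = p i * F (X 0 * g)) :
    ∀ e, e ≤ d → ∀ m : Fin 4 →₀ ℕ, m.degree = e →
      p 0 ^ e * F (monomial m 1 * X 0 ^ (d - e)) = eval p (monomial m 1) * F (X 0 ^ d) := by
  intro e
  induction e with
  | zero =>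
    intro _ m hm
    rw [Finsupp.degree_eq_zero_iff] at hm
    subst hm
    simp
  | succ e ih =>
    intro he m hm
    have hm0 : m ≠ 0 := by
      rintro rfl
      simp at hm
    obtain ⟨i, hi⟩ := Finsupp.ne_iff.mp hm0
    have hi' : Finsupp.single i 1 ≤ m := by
      rw [Finsupp.single_le_iff]
      exact Nat.one_le_iff_ne_zero.mpr hi
    obtain ⟨m', rfl⟩ := exists_add_of_le hi'
    have hm' : m'.degree = e := by
      rw [map_add, Finsupp.degree_single] at hm
      omega
    have h1 := ih (by omega) m' hm'
    have hmon : (monomial (Finsupp.single i 1 + m') (1 : k)) = X i * monomial m' 1 := by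
      rw [X, monomial_mul, one_mul]
    have hhom : (monomial m' (1 : k) * X 0 ^ (d - (e + 1)) :
        MvPolynomial (Fin 4) k).IsHomogeneous (d - 1) := by
      have := (isHomogeneous_monomial (1 : k) hm').mul
        ((isHomogeneous_X k (0 : Fin 4)).pow (d - (e + 1)))
      convert this using 1
      omega
    have h2 := hF i _ hhom
    have h3 : X 0 * (monomial m' (1 : k) * X 0 ^ (d - (e + 1)) : MvPolynomial (Fin 4) k)
        = monomial m' 1 * X 0 ^ (d - e) := by
      have : d - e = (d - (e + 1)) + 1 := by omega
      rw [this]; ring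
    rw [h3, ← mul_assoc] at h2
    rw [hmon, eval_mul, eval_X, pow_succ, mul_assoc, h2]
    linear_combination p i * h1

lemma aux_indep {k : Type*} [Field k] (p : Fin 4 → k) (h0 : p 0 ≠ 0) (i j : Fin 4)
    (hi : i ≠ 0) (hj : j ≠ 0) (hij : i ≠ j) :
    LinearIndependent k ![(C (p 0) * X i - C (p i) * X 0 : MvPolynomial (Fin 4) k),
      C (p 0) * X j - C (p j) * X 0] := by
  rw [LinearIndependent.pair_iff]
  intro s t h
  have hE : ∀ q : Fin 4 → k, s * (p 0 * q i - p i * q 0) + t * (p 0 * q j - p j * q 0) = 0 := by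
    intro q
    have := congrArg (eval q) h
    simpa [smul_eq_C_mul] using this
  have h1 := hE (Pi.single i 1)
  have h2 := hE (Pi.single j 1)
  simp [hi, hj, hij, hij.symm, hi.symm, hj.symm, h0] at h1 h2
  exact ⟨h1, h2⟩

lemma aux_lin {k : Type*} [Field k] (a b : k) (i j : Fin 4) :
    (C a * X i - C b * X j : MvPolynomial (Fin 4) k) ∈ homogeneousSubmodule (Fin 4) k 1 := by
  rw [← smul_eq_C_mul, ← smul_eq_C_mul]
  exact Submodule.sub_mem _ (Submodule.smul_mem _ _ (isHomogeneous_X k i))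
    (Submodule.smul_mem _ _ (isHomogeneous_X k j))

/-- Let `S = k[x,y,z,t]` (char `k` = 0), `d ≥ 1`, and let
`ψ : S_d → S_d` be `k`-linear such that `ψ(ℓ·S_{d-1} + h·S_{d-1}) ⊆ ℓ·S_{d-1} + h·S_{d-1}`
for all linearly independent linear forms `ℓ, h ∈ S₁`.  Then `ψ` is multiplication by a
scalar `α ∈ k`. -/
theorem stmt_8 {k : Type*} [Field k] [CharZero k] (d : ℕ) (hd : 1 ≤ d)
    (ψ : homogeneousSubmodule (Fin 4) k d →ₗ[k] homogeneousSubmodule (Fin 4) k d)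
    (hψ : ∀ ℓ h : MvPolynomial (Fin 4) k,
      ℓ ∈ homogeneousSubmodule (Fin 4) k 1 → h ∈ homogeneousSubmodule (Fin 4) k 1 →
      LinearIndependent k ![ℓ, h] →
      ∀ f : homogeneousSubmodule (Fin 4) k d,
        (f : MvPolynomial (Fin 4) k) ∈
            Submodule.map (LinearMap.mulLeft k ℓ) (homogeneousSubmodule (Fin 4) k (d - 1)) ⊔
              Submodule.map (LinearMap.mulLeft k h) (homogeneousSubmodule (Fin 4) k (d - 1)) →
          (ψ f : MvPolynomial (Fin 4) k) ∈
            Submodule.map (LinearMap.mulLeft k ℓ) (homogeneousSubmodule (Fin 4) k (d - 1)) ⊔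
              Submodule.map (LinearMap.mulLeft k h) (homogeneousSubmodule (Fin 4) k (d - 1))) :
    ∃ α : k, ∀ f, ψ f = α • f := by
  classical
  -- total extension of ψ
  let π : MvPolynomial (Fin 4) k →ₗ[k] homogeneousSubmodule (Fin 4) k d :=
    (homogeneousComponent d).codRestrict _ (fun f => homogeneousComponent_isHomogeneous d f)
  have hπ : ∀ f : homogeneousSubmodule (Fin 4) k d, π f = f := by
    intro f
    apply Subtype.ext
    change homogeneousComponent d (f : MvPolynomial (Fin 4) k) = f
    rw [homogeneousComponent_of_mem f.2, if_pos rfl]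
  let Φ : MvPolynomial (Fin 4) k →ₗ[k] MvPolynomial (Fin 4) k :=
    (homogeneousSubmodule (Fin 4) k d).subtype ∘ₗ ψ ∘ₗ π
  have hΦ : ∀ f : homogeneousSubmodule (Fin 4) k d, Φ f = ψ f := by
    intro f
    change ((ψ (π f) : _) : MvPolynomial (Fin 4) k) = ψ f
    rw [hπ]
  have hX : ∀ i : Fin 4, (X i ^ d : MvPolynomial (Fin 4) k) ∈ homogeneousSubmodule (Fin 4) k d := by
    intro i
    have := (isHomogeneous_X k i).pow d
    rwa [one_mul] at this
  -- pointwise relation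
  have key : ∀ p : Fin 4 → k, p 0 ≠ 0 → ∀ f ∈ homogeneousSubmodule (Fin 4) k d,
      p 0 ^ d * eval p (Φ f) = eval p f * eval p (Φ (X 0 ^ d)) := by
    intro p h0 f hf
    let F : MvPolynomial (Fin 4) k →ₗ[k] k := (aeval p).toLinearMap ∘ₗ Φ
    have hFe : ∀ g, F g = eval p (Φ g) := by
      intro g
      change aeval p (Φ g) = _
      rw [aeval_eq_eval]
    have hF : ∀ i, ∀ g : MvPolynomial (Fin 4) k, g.IsHomogeneous (d - 1) →
        p 0 * F (X i * g) = p i * F (X 0 * g) := by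
      intro i g hg
      by_cases hi : i = 0
      · rw [hi]
      obtain ⟨j, hj, hij⟩ : ∃ j : Fin 4, j ≠ 0 ∧ i ≠ j := by
        revert i; decide
      have hl := aux_lin (p 0) (p i) i 0
      have hu : (C (p 0) * X i - C (p i) * X 0) * g ∈ homogeneousSubmodule (Fin 4) k d := by
        have := IsHomogeneous.mul hl hg
        rwa [Nat.add_sub_cancel' hd] at this
      have := hψ _ _ hl (aux_lin (p 0) (p j) j 0)
        (aux_indep p h0 i j hi hj hij) ⟨_, hu⟩
        (Submodule.mem_sup_left ⟨g, hg, rfl⟩)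
      rw [← hΦ] at this
      obtain ⟨a, ⟨a', -, rfl⟩, b, ⟨b', -, rfl⟩, hab⟩ := Submodule.mem_sup.mp this
      have hz : F ((C (p 0) * X i - C (p i) * X 0) * g) = 0 := by
        rw [hFe, ← hab]
        simp
        ring
      rw [sub_mul, map_sub, mul_assoc, mul_assoc, ← smul_eq_C_mul, ← smul_eq_C_mul, map_smul,
        map_smul, sub_eq_zero] at hz
      exact hz
    have hmon := aux_monomial d p F hF d le_rfl
    rw [← hFe, ← hFe]
    rw [f.as_sum]
    simp only [map_sum, Finset.mul_sum, Finset.sum_mul]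
    refine Finset.sum_congr rfl fun m hm => ?_
    have hdeg : m.degree = d := by
      have := hf (mem_support_iff.mp hm)
      rw [Finsupp.degree_eq_weight_one]
      exact this
    have h1 := hmon m hdeg
    have h2 : monomial m (coeff m f) = coeff m f • (monomial m (1 : k)) := by
      rw [smul_monomial, smul_eq_mul, mul_one]
    rw [h2, map_smul, smul_eval, smul_eq_mul]
    rw [Nat.sub_self, pow_zero, mul_one] at h1
    linear_combination coeff m f * h1
  have key2 : ∀ f ∈ homogeneousSubmodule (Fin 4) k d,
      X 0 ^ d * Φ f = f * Φ (X 0 ^ d) := by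
    intro f hf
    apply mul_left_cancel₀ (X_ne_zero (R := k) (0 : Fin 4))
    apply MvPolynomial.funext
    intro p
    by_cases h0 : p 0 = 0
    · simp [h0]
    · have := key p h0 f hf
      simp only [map_mul, map_pow, eval_X]
      rw [this]
  -- Φ (X 0 ^ d) is a multiple of X 0 ^ d
  have hP : Φ (X 0 ^ d) = monomial (Finsupp.single 0 d) (coeff (Finsupp.single 0 d) (Φ (X 0 ^ d))) := by
    have h1 := key2 _ (hX 1)
    have hPh : (Φ (X 0 ^ d)).IsHomogeneous d := by
      exact (ψ (π (X 0 ^ d))).2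
    ext m
    rw [coeff_monomial]
    split_ifs with hm
    · rw [hm]
    by_contra hne
    have hdeg : m.degree = d := by
      have := hPh hne
      rw [Finsupp.degree_eq_weight_one]
      exact this
    have h2 := congrArg (coeff (Finsupp.single 1 d + m)) h1
    rw [X_pow_eq_monomial, X_pow_eq_monomial, coeff_monomial_mul, coeff_monomial_mul', if_neg,
      one_mul] at h2
    · rw [X_pow_eq_monomial] at hne
      exact hne h2.symm
    · intro hle
      rw [Finsupp.single_le_iff] at hle
      simp at hle
      apply hm
      rw [Finsupp.degree_eq_sum, Fin.sum_univ_four] at hdeg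
      ext i
      fin_cases i <;> simp <;> omega
  refine ⟨coeff (Finsupp.single 0 d) (Φ (X 0 ^ d)), fun f => ?_⟩
  apply Subtype.ext
  have h1 := key2 f f.2
  rw [hΦ, hP] at h1
  apply mul_left_cancel₀ (pow_ne_zero d (X_ne_zero (R := k) (0 : Fin 4)))
  rw [h1, Submodule.coe_smul, smul_eq_C_mul, ← C_mul_X_pow_eq_monomial]
  ring
end

section
/- Let S = ℂ[x,y,z,t], and let I, J ⊆ S be homogeneous ideals defining curves in ℙ³, i.e., such that the Krull dimension of S/I and of S/J equals 2. For such an ideal K define its CM-part CM(K) = {f ∈ S : f maps to 0 in the localization (S/K)_𝔭 for every associated prime 𝔭 of S/K with dim S/𝔭 = 2}. Suppose there is a subset L ⊆ S_1 that is Zariski-dense in S_1 ≅ ℂ^4 (i.e., L is not contained in the zero locus of any nonzero polynomial function on S_1) such that every ℓ ∈ L is a nonzerodivisor on both S/I and S/J, and such that for every ℓ ∈ L the images of I and J in S/ℓS agree in all sufficiently high degrees: (I + ℓS)_n = (J + ℓS)_n for all n ≫ 0. Then CM(I) = CM(J). -/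
open MvPolynomial

/-- The CM-part (Cohen–Macaulay part) of a homogeneous ideal `K ⊆ S = ℂ[x,y,z,t]` defining
a curve: the set of `f ∈ S` mapping to `0` in the localization `(S/K)_𝔭` for every
associated prime `𝔭` of `S/K` with `dim S/𝔭 = 2`. -/
noncomputable def CMpart (K : Ideal (MvPolynomial (Fin 4) ℂ)) : Set (MvPolynomial (Fin 4) ℂ) :=
  {f | ∀ (p : Ideal (MvPolynomial (Fin 4) ℂ)) (hp : p.IsPrime),
    p ∈ associatedPrimes (MvPolynomial (Fin 4) ℂ) (MvPolynomial (Fin 4) ℂ ⧸ K) →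
    ringKrullDim (MvPolynomial (Fin 4) ℂ ⧸ p) = 2 →
    LocalizedModule.mkLinearMap (@Ideal.primeCompl (MvPolynomial (Fin 4) ℂ) _ p hp)
      (MvPolynomial (Fin 4) ℂ ⧸ K) (Ideal.Quotient.mk K f) = 0}

namespace CMaux

abbrev S := MvPolynomial (Fin 4) ℂ

/-- homogeneous component of a product with a homogeneous factor -/
lemma comp_mul {h : S} {e : ℕ} (hh : h.IsHomogeneous e) (t : S) (n : ℕ) :
    homogeneousComponent (n + e) (h * t) = h * homogeneousComponent n t := by
  conv_lhs => rw [← sum_homogeneousComponent t, Finset.mul_sum, map_sum]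
  have : ∀ i ∈ Finset.range (t.totalDegree + 1),
      homogeneousComponent (n + e) (h * homogeneousComponent i t) =
        if i = n then h * homogeneousComponent n t else 0 := by
    intro i _
    have hm : h * homogeneousComponent i t ∈ homogeneousSubmodule (Fin 4) ℂ (e + i) :=
      hh.mul (homogeneousComponent_isHomogeneous i t)
    rw [homogeneousComponent_of_mem hm]
    by_cases hi : i = n
    · subst hi; simp [add_comm]
    · rw [if_neg (by omega), if_neg hi]
  rw [Finset.sum_congr rfl this, Finset.sum_ite_eq']
  split_ifs with hn
  · rfl
  · rw [homogeneousComponent_eq_zero n t (by simpa using hn), mul_zero]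

lemma comp_mul_lt {h : S} {e : ℕ} (hh : h.IsHomogeneous e) (t : S) (n : ℕ) (hn : n < e) :
    homogeneousComponent n (h * t) = 0 := by
  rw [← sum_homogeneousComponent t, Finset.mul_sum, map_sum]
  refine Finset.sum_eq_zero fun i _ => ?_
  have hm : h * homogeneousComponent i t ∈ homogeneousSubmodule (Fin 4) ℂ (e + i) :=
    hh.mul (homogeneousComponent_isHomogeneous i t)
  rw [homogeneousComponent_of_mem hm, if_neg (by omega)]

/-- `K : 𝔪 ^ c`, via monomials -/
def col (K : Ideal S) (c : ℕ) : Ideal S where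
  carrier := {g | ∀ d : Fin 4 →₀ ℕ, d.degree = c → monomial d (1 : ℂ) * g ∈ K}
  add_mem' := fun ha hb d hd => by rw [mul_add]; exact K.add_mem (ha d hd) (hb d hd)
  zero_mem' := fun d _ => by simp
  smul_mem' := fun a g hg d hd => by
    rw [smul_eq_mul, mul_left_comm]; exact K.mul_mem_left _ (hg d hd)

lemma mem_col {K : Ideal S} {c : ℕ} {g : S} :
    g ∈ col K c ↔ ∀ d : Fin 4 →₀ ℕ, d.degree = c → monomial d (1 : ℂ) * g ∈ K := Iff.rfl

lemma exists_split (d : Fin 4 →₀ ℕ) (c : ℕ) (hd : d.degree = c + 1) :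
    ∃ (i : Fin 4) (d' : Fin 4 →₀ ℕ), d'.degree = c ∧
      (monomial d (1 : ℂ) : S) = monomial d' 1 * X i := by
  have hne : d ≠ 0 := by rintro rfl; simp at hd
  obtain ⟨i, hi⟩ := Finsupp.ne_iff.mp hne
  have hle : Finsupp.single i 1 ≤ d := by
    simpa [Nat.one_le_iff_ne_zero] using hi
  have he : d - Finsupp.single i 1 + Finsupp.single i 1 = d := tsub_add_cancel_of_le hle
  refine ⟨i, d - Finsupp.single i 1, ?_, ?_⟩
  · have := congrArg Finsupp.degree he
    rw [map_add, Finsupp.degree_single] at this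
    omega
  · rw [X, monomial_mul, he, one_mul]

lemma col_mono (K : Ideal S) : Monotone (col K) := by
  refine monotone_nat_of_le_succ fun c g hg d hd => ?_
  obtain ⟨i, d', hd', h⟩ := exists_split d c hd
  rw [h, mul_right_comm, mul_comm]
  exact K.mul_mem_left _ (hg d' hd')

lemma le_col (K : Ideal S) (c : ℕ) : K ≤ col K c := fun _ hg _ _ => K.mul_mem_left _ hg

lemma exists_sat (K : Ideal S) : ∃ c : ℕ, ∀ g : S, (∀ i, X i * g ∈ col K c) → g ∈ col K c := by
  obtain ⟨c, hc⟩ := monotone_stabilizes_iff_noetherian.mpr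
    (inferInstance : IsNoetherian S S) ⟨col K, col_mono K⟩
  refine ⟨c, fun g hg => ?_⟩
  have h1 : col K c = col K (c + 1) := hc (c + 1) (by omega)
  rw [h1]
  intro d hd
  obtain ⟨i, d', hd', h⟩ := exists_split d c hd
  rw [h, mul_assoc]
  exact hg i d' hd'

lemma col_hom {K : Ideal S} (hK : ∀ f ∈ K, ∀ n : ℕ, homogeneousComponent n f ∈ K) (c : ℕ) :
    ∀ f ∈ col K c, ∀ n : ℕ, homogeneousComponent n f ∈ col K c := by
  intro f hf n d hd
  rw [← comp_mul (isHomogeneous_monomial (1 : ℂ) hd)]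
  exact hK _ (hf d hd) _

/-- in large degrees the colon ideal agrees with `K` -/
lemma col_large {K : Ideal S} (hK : ∀ f ∈ K, ∀ n : ℕ, homogeneousComponent n f ∈ K) (c : ℕ) :
    ∃ N : ℕ, ∀ n, N ≤ n → ∀ f ∈ col K c, homogeneousComponent n f ∈ K := by
  obtain ⟨T, hT⟩ := (isNoetherianRing_iff_ideal_fg S).mp inferInstance (col K c)
  refine ⟨T.sup totalDegree + c, fun n hn f hf => ?_⟩
  rw [← hT] at hf
  obtain ⟨a, _, ha⟩ := Submodule.mem_span_finset.mp hf
  rw [← ha, map_sum]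
  refine K.sum_mem fun t ht => ?_
  have htc : t ∈ col K c := by rw [← hT]; exact Submodule.subset_span ht
  have htd : t.totalDegree ≤ T.sup totalDegree := Finset.le_sup (f := totalDegree) ht
  rw [smul_eq_mul, (a t).as_sum, Finset.sum_mul, map_sum]
  refine K.sum_mem fun d _ => ?_
  have hd := isHomogeneous_monomial (coeff d (a t)) (rfl : d.degree = d.degree)
  by_cases hdc : c ≤ d.degree
  · have : monomial d (1 : ℂ) * t ∈ K := col_mono K hdc htc d rfl
    apply hK
    have h2 : (monomial d (coeff d (a t)) : S) = C (coeff d (a t)) * monomial d 1 := by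
      rw [C_mul_monomial, mul_one]
    rw [h2, mul_assoc]
    exact K.mul_mem_left _ this
  · obtain ⟨k, rfl⟩ : ∃ k, n = k + d.degree := ⟨n - d.degree, by omega⟩
    rw [comp_mul hd, homogeneousComponent_eq_zero k t (by omega), mul_zero]
    exact K.zero_mem

/-- a general linear form is regular modulo a saturated ideal -/
lemma exists_regular (L : Set S) (hL1 : ∀ ℓ ∈ L, ℓ ∈ homogeneousSubmodule (Fin 4) ℂ 1)
    (hLdense : ∀ p : S,
      (∀ ℓ ∈ L, eval (fun i : Fin 4 => coeff (Finsupp.single i 1) ℓ) p = 0) → p = 0)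
    (K : Ideal S) (hK : ∀ g : S, (∀ i, X i * g ∈ K) → g ∈ K) :
    ∃ ℓ ∈ L, ∀ g, ℓ * g ∈ K → g ∈ K := by
  classical
  have hfin := associatedPrimes.finite S (S ⧸ K)
  have hvar : ∀ q ∈ associatedPrimes S (S ⧸ K), ∃ i : Fin 4, (X i : S) ∉ q := by
    intro q hq
    rw [AssociatedPrimes.mem_iff, isAssociatedPrime_iff] at hq
    obtain ⟨hp, x, hx⟩ := hq
    obtain ⟨g, rfl⟩ := Ideal.Quotient.mk_surjective x
    have hmem : ∀ r : S, r ∈ q ↔ r * g ∈ K := by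
      intro r
      rw [hx, Submodule.mem_colon_singleton, Submodule.mem_bot, ← Ideal.Quotient.eq_zero_iff_mem,
        map_mul]
      rfl
    by_contra! hcon
    have : g ∈ K := hK g fun i => (hmem _).mp (hcon i)
    exact hp.ne_top ((Ideal.eq_top_iff_one _).mpr ((hmem 1).mpr (by simpa using this)))
  have hP : ∀ q ∈ associatedPrimes S (S ⧸ K), ∃ P : S, P ≠ 0 ∧ ∀ ℓ ∈ L, ℓ ∈ q →
      eval (fun i : Fin 4 => coeff (Finsupp.single i 1) ℓ) P = 0 := by
    intro q hq
    obtain ⟨i, hi⟩ := hvar q hq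
    obtain ⟨φ, hφ0, hφq⟩ := Submodule.exists_le_ker_of_notMem
      (show (X i : S) ∉ Submodule.restrictScalars ℂ q from hi)
    refine ⟨∑ j, C (φ (X j)) * X j, ?_, ?_⟩
    · intro h0
      have := congrArg (coeff (Finsupp.single i 1)) h0
      rw [coeff_sum, Finset.sum_eq_single i] at this
      · simp [coeff_C_mul] at this
        exact hφ0 this
      · intro j _ hj
        rw [coeff_C_mul, coeff_X', if_neg, mul_zero]
        intro h
        exact hj (Finsupp.single_left_injective one_ne_zero h)
      · simp
    · intro ℓ hℓ hℓq
      have hsum : ℓ = ∑ j, coeff (Finsupp.single j 1) ℓ • (X j : S) := by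
        have h1 : ℓ.IsHomogeneous 1 := hL1 ℓ hℓ
        ext d
        rw [coeff_sum]
        by_cases hd : d.degree = 1
        · obtain ⟨k, d', hd', h⟩ := exists_split d 0 hd
          have : d' = 0 := (Finsupp.degree_eq_zero_iff d').mp hd'
          subst this
          have hdk : d = Finsupp.single k 1 := by
            rw [X, monomial_mul, zero_add, one_mul] at h
            exact monomial_left_injective one_ne_zero h
          subst hdk
          rw [Finset.sum_eq_single k]
          · simp
          · intro j _ hj
            rw [coeff_smul, coeff_X', if_neg, smul_zero]
            intro h
            exact hj (Finsupp.single_left_injective one_ne_zero h)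
          · simp
        · rw [h1.coeff_eq_zero hd, Finset.sum_eq_zero]
          intro j _
          rw [coeff_smul, (isHomogeneous_X ℂ j).coeff_eq_zero hd, smul_zero]
      have h0 : φ ℓ = 0 := hφq hℓq
      rw [hsum, map_sum] at h0
      rw [map_sum, ← h0]
      refine Finset.sum_congr rfl fun j _ => ?_
      simp [mul_comm]
  choose! P hP0 hPL using hP
  have hprod : (∏ q ∈ hfin.toFinset, P q) ≠ 0 :=
    Finset.prod_ne_zero_iff.mpr fun q hq => hP0 q (hfin.mem_toFinset.mp hq)
  have : ∃ ℓ ∈ L, eval (fun i : Fin 4 => coeff (Finsupp.single i 1) ℓ)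
      (∏ q ∈ hfin.toFinset, P q) ≠ 0 := by
    by_contra! h
    exact hprod (hLdense _ h)
  obtain ⟨ℓ, hℓ, hne⟩ := this
  refine ⟨ℓ, hℓ, fun g hg => ?_⟩
  by_contra hgK
  have hz : ℓ ∈ { r : S | ∃ x : S ⧸ K, x ≠ 0 ∧ r • x = 0 } :=
    ⟨Ideal.Quotient.mk K g, fun h => hgK (Ideal.Quotient.eq_zero_iff_mem.mp h),
      Ideal.Quotient.eq_zero_iff_mem.mpr hg⟩
  rw [← biUnion_associatedPrimes_eq_zero_divisors] at hz
  obtain ⟨q, hq, hℓq⟩ := Set.mem_iUnion₂.mp hz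
  rw [map_prod] at hne
  exact Finset.prod_ne_zero_iff.mp hne q (hfin.mem_toFinset.mpr hq) (hPL q hq ℓ hℓ hℓq)

/-- if all variables are multiples of one element modulo `p`, the dimension is at most one -/
lemma dim_le (p : Ideal S) (ℓ : S) (a : Fin 4 → ℂ) (h : ∀ i, X i - C (a i) * ℓ ∈ p) :
    ringKrullDim (S ⧸ p) ≤ 1 := by
  let φ : Polynomial ℂ →ₐ[ℂ] (S ⧸ p) := Polynomial.aeval (Ideal.Quotient.mkₐ ℂ p ℓ)
  have hs : Function.Surjective φ := by
    rw [← AlgHom.range_eq_top, eq_top_iff]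
    have : (⊤ : Subalgebra ℂ (S ⧸ p)) = (⊤ : Subalgebra ℂ S).map (Ideal.Quotient.mkₐ ℂ p) := by
      rw [Algebra.map_top, (AlgHom.range_eq_top _).mpr (Ideal.Quotient.mkₐ_surjective ℂ p)]
    rw [this, ← MvPolynomial.adjoin_range_X, AlgHom.map_adjoin, Algebra.adjoin_le_iff]
    rintro _ ⟨_, ⟨i, rfl⟩, rfl⟩
    refine ⟨Polynomial.C (a i) * Polynomial.X, ?_⟩
    have := Ideal.Quotient.eq.mpr (h i)
    simp only [φ, Ideal.Quotient.mkₐ_eq_mk]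
    refine Eq.trans ?_ this.symm
    simp [map_mul]
    rfl
  refine (ringKrullDim_le_of_surjective φ.toRingHom hs).trans ?_
  rw [Polynomial.ringKrullDim_of_isNoetherianRing, ringKrullDim_eq_zero_of_field]
  simp

/-- Cayley–Hamilton step -/
lemma exists_root (I p : Ideal S) (hp : p.IsPrime) (V : Submodule ℂ S) [FiniteDimensional ℂ V]
    (x ℓ : S) (hx : ∀ v ∈ V, ∃ w ∈ V, x * v - ℓ * w ∈ I)
    (hann : ∀ s : S, (∀ v ∈ V, s * v ∈ I) → s ∈ p) :
    ∃ a : ℂ, x - C a * ℓ ∈ p := by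
  let π : S →ₗ[ℂ] (S ⧸ I) := (Ideal.Quotient.mkₐ ℂ I).toLinearMap
  have hπ : ∀ s, π s = 0 ↔ s ∈ I := fun s => Ideal.Quotient.eq_zero_iff_mem
  let fx : V →ₗ[ℂ] (S ⧸ I) := π ∘ₗ (LinearMap.mulLeft ℂ x) ∘ₗ V.subtype
  let fl : V →ₗ[ℂ] (S ⧸ I) := π ∘ₗ (LinearMap.mulLeft ℂ ℓ) ∘ₗ V.subtype
  have hr : ∀ v, fx v ∈ LinearMap.range fl := by
    intro v
    obtain ⟨w, hw, h⟩ := hx v v.2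
    refine ⟨⟨w, hw⟩, ?_⟩
    have := (hπ _).mpr h
    rw [map_sub, sub_eq_zero] at this
    exact this.symm
  obtain ⟨A, hA⟩ := Module.projective_lifting_property fl.rangeRestrict
    (fx.codRestrict (LinearMap.range fl) hr) fl.surjective_rangeRestrict
  have hA' : ∀ v : V, x * (v : S) - ℓ * (A v : S) ∈ I := by
    intro v
    have := congrArg Subtype.val (LinearMap.congr_fun hA v)
    rw [← hπ, map_sub, sub_eq_zero]
    exact this.symm
  have hmul : ∀ (m : Multiset ℂ) (v : V),
      (m.map fun a => x - C a * ℓ).prod * (v : S) -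
        ℓ ^ (Multiset.card m) *
          ((Polynomial.aeval A (m.map fun a => Polynomial.X - Polynomial.C a).prod v : V) : S)
        ∈ I := by
    intro m
    induction m using Multiset.induction with
    | empty => intro v; simp
    | cons a m ih =>
      intro v
      set B := Polynomial.aeval A (m.map fun a => Polynomial.X - Polynomial.C a).prod with hB
      have h1 := I.mul_mem_left (x - C a * ℓ) (ih v)
      have h2 := I.mul_mem_left (ℓ ^ Multiset.card m) (hA' (B v))
      have h3 := I.add_mem h1 h2
      have h4 : ((Polynomial.aeval A
          ((a ::ₘ m).map fun a => Polynomial.X - Polynomial.C a).prod v : V) : S) =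
          (A (B v) : S) - C a * (B v : S) := by
        rw [Multiset.map_cons, Multiset.prod_cons, map_mul, ← hB]
        simp [Module.algebraMap_end_apply, MvPolynomial.smul_eq_C_mul]
      rw [h4, Multiset.map_cons, Multiset.prod_cons, Multiset.card_cons]
      convert h3 using 1
      ring
  have hsp : (minpoly ℂ A).Splits := IsAlgClosed.splits _
  have hmon : (minpoly ℂ A).Monic := minpoly.monic (Algebra.IsIntegral.isIntegral A)
  have heq := hsp.eq_prod_roots_of_monic hmon
  have hmem : ((minpoly ℂ A).roots.map fun a => x - C a * ℓ).prod ∈ p := by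
    refine hann _ fun v hv => ?_
    have := hmul (minpoly ℂ A).roots ⟨v, hv⟩
    have h0 : Polynomial.aeval A (minpoly ℂ A) = 0 := minpoly.aeval ℂ A
    rw [← heq, h0] at this
    simpa using this
  obtain ⟨y, hy, hyp⟩ := (Ideal.IsPrime.multiset_prod_mem_iff_exists_mem hp _).mp hmem
  obtain ⟨a, _, rfl⟩ := Multiset.mem_map.mp hy
  exact ⟨a, hyp⟩

lemma key (I J : Ideal S)
    (hIhom : ∀ f ∈ I, ∀ n : ℕ, homogeneousComponent n f ∈ I)
    (hJhom : ∀ f ∈ J, ∀ n : ℕ, homogeneousComponent n f ∈ J)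
    (L : Set S)
    (hL1 : ∀ ℓ ∈ L, ℓ ∈ homogeneousSubmodule (Fin 4) ℂ 1)
    (hLdense : ∀ p : S,
      (∀ ℓ ∈ L, eval (fun i : Fin 4 => coeff (Finsupp.single i 1) ℓ) p = 0) → p = 0)
    (hLeq : ∀ ℓ ∈ L, ∃ N : ℕ, ∀ n : ℕ, N ≤ n →
      Submodule.restrictScalars ℂ (I ⊔ Ideal.span {ℓ}) ⊓
          homogeneousSubmodule (Fin 4) ℂ n =
        Submodule.restrictScalars ℂ (J ⊔ Ideal.span {ℓ}) ⊓
          homogeneousSubmodule (Fin 4) ℂ n)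
    (p : Ideal S) (hp : p.IsPrime) (hdim : ringKrullDim (S ⧸ p) = 2) :
    ∃ s, s ∉ p ∧ ∀ f ∈ J, s * f ∈ I := by
  have hKhom : ∀ f ∈ I ⊔ J, ∀ n : ℕ, homogeneousComponent n f ∈ I ⊔ J := by
    intro f hf n
    obtain ⟨i, hi, j, hj, rfl⟩ := Submodule.mem_sup.mp hf
    rw [map_add]
    exact Submodule.add_mem_sup (hIhom i hi n) (hJhom j hj n)
  obtain ⟨c, hc⟩ := exists_sat (I ⊔ J)
  obtain ⟨N₁, hN₁⟩ := col_large hKhom c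
  have hK'hom := col_hom hKhom c
  have hKK' := le_col (I ⊔ J) c
  set K' := col (I ⊔ J) c
  obtain ⟨ℓ, hℓ, hreg⟩ := exists_regular L hL1 hLdense K' hc
  obtain ⟨N₂, hN₂⟩ := hLeq ℓ hℓ
  have hℓ1 : ℓ.IsHomogeneous 1 := hL1 ℓ hℓ
  set N := max N₁ N₂
  have step : ∀ n, N ≤ n → ∀ f ∈ K', f.IsHomogeneous (n + 1) →
      ∃ g ∈ K', g.IsHomogeneous n ∧ f - ℓ * g ∈ I := by
    intro n hn f hf hfh
    have hfK := hN₁ (n + 1) (by omega) f hf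
    rw [homogeneousComponent_eq_self hfh] at hfK
    obtain ⟨i, hi, j, hj, hij⟩ := Submodule.mem_sup.mp hfK
    have hjm : homogeneousComponent (n + 1) j ∈
        Submodule.restrictScalars ℂ (J ⊔ Ideal.span {ℓ}) ⊓
          homogeneousSubmodule (Fin 4) ℂ (n + 1) :=
      ⟨Submodule.mem_sup_left (hJhom j hj _), homogeneousComponent_isHomogeneous _ _⟩
    rw [← hN₂ (n + 1) (by omega)] at hjm
    obtain ⟨i', hi', b, hb, hib⟩ := Submodule.mem_sup.mp hjm.1
    obtain ⟨g, rfl⟩ := Ideal.mem_span_singleton'.mp hb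
    have e1 := congrArg (homogeneousComponent (n + 1)) hib
    rw [homogeneousComponent_eq_self (homogeneousComponent_isHomogeneous _ _), map_add,
      mul_comm g, comp_mul hℓ1] at e1
    have e2 := congrArg (homogeneousComponent (n + 1)) hij
    rw [homogeneousComponent_eq_self hfh, map_add, ← e1] at e2
    have hfin : f - ℓ * homogeneousComponent n g ∈ I := by
      have : f - ℓ * homogeneousComponent n g =
        homogeneousComponent (n + 1) i + homogeneousComponent (n + 1) i' := by
        rw [← e2]; ring
      rw [this]
      exact I.add_mem (hIhom _ hi _) (hIhom _ hi' _)
    refine ⟨homogeneousComponent n g, hreg _ ?_, homogeneousComponent_isHomogeneous _ _, hfin⟩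
    have := K'.sub_mem hf (hKK' (Submodule.mem_sup_left (T := J) hfin))
    rwa [sub_sub_cancel] at this
  have hnd : ∀ a : Fin 4 → ℂ, ¬ ∀ i, X i - C (a i) * ℓ ∈ p := by
    intro a h
    have := dim_le p ℓ a h
    rw [hdim] at this
    exact absurd this (by decide)
  have : ∃ s, s ∉ p ∧ ∀ v ∈ Submodule.restrictScalars ℂ K' ⊓ homogeneousSubmodule (Fin 4) ℂ N,
      s * v ∈ I := by
    by_contra! hcon
    have : FiniteDimensional ℂ (homogeneousSubmodule (Fin 4) ℂ N) :=
      Module.Finite.iff_fg.mpr (homogeneousSubmodule_fg _ _ N)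
    have : FiniteDimensional ℂ
        ↥(Submodule.restrictScalars ℂ K' ⊓ homogeneousSubmodule (Fin 4) ℂ N) :=
      Submodule.finiteDimensional_inf_right _ _
    have hroot : ∀ i : Fin 4, ∃ a : ℂ, X i - C a * ℓ ∈ p := by
      intro i
      refine exists_root I p hp
        (Submodule.restrictScalars ℂ K' ⊓ homogeneousSubmodule (Fin 4) ℂ N) (X i) ℓ ?_ ?_
      · rintro v ⟨hv, hvh⟩
        have hvh' : v.IsHomogeneous N := hvh
        obtain ⟨g, hg, hgh, h⟩ := step N le_rfl (X i * v) (K'.mul_mem_left _ hv)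
          (by rw [add_comm]; exact (isHomogeneous_X ℂ i).mul hvh')
        exact ⟨g, ⟨hg, hgh⟩, h⟩
      · intro s hs
        by_contra hsp
        obtain ⟨v, hv, hvI⟩ := hcon s hsp
        exact hvI (hs v hv)
    choose a ha using hroot
    exact hnd a ha
  obtain ⟨s, hsp, hs⟩ := this
  have hall : ∀ k, ∀ f ∈ K', f.IsHomogeneous (N + k) → s * f ∈ I := by
    intro k
    induction k with
    | zero => exact fun f hf hfh => hs f ⟨hf, hfh⟩
    | succ k ih =>
      intro f hf hfh
      obtain ⟨g, hg, hgh, h⟩ := step (N + k) (by omega) f hf hfh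
      have h1 := I.mul_mem_left s h
      have h2 := I.mul_mem_left ℓ (ih g hg hgh)
      have h3 := I.add_mem h1 h2
      convert h3 using 1
      ring
  obtain ⟨i, hi⟩ : ∃ i : Fin 4, (X i : S) ∉ p := by
    by_contra! h
    exact hnd 0 (by simpa using h)
  refine ⟨s * X i ^ N, hp.mul_notMem hsp fun h => hi (hp.mem_of_pow_mem _ h), fun f hf => ?_⟩
  rw [← sum_homogeneousComponent f, Finset.mul_sum]
  refine I.sum_mem fun d _ => ?_
  rw [mul_assoc]
  refine hall d _ (K'.mul_mem_left _ (hKK' (Submodule.mem_sup_right (hJhom f hf d)))) ?_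
  exact (isHomogeneous_X_pow i N).mul (homogeneousComponent_isHomogeneous d f)

lemma loc_iff (K p : Ideal S) (hp : p.IsPrime) (f : S) :
    LocalizedModule.mkLinearMap (@Ideal.primeCompl S _ p hp) (S ⧸ K) (Ideal.Quotient.mk K f) = 0
      ↔ ∃ s, s ∉ p ∧ s * f ∈ K := by
  rw [← LinearMap.mem_ker, LocalizedModule.mem_ker_mkLinearMap_iff]
  refine exists_congr fun s => and_congr Iff.rfl ?_
  rw [← Ideal.Quotient.eq_zero_iff_mem]
  rfl

lemma ass_of {I J p : Ideal S} {s t : S} (hs : s ∉ p) (hsJ : ∀ f ∈ J, s * f ∈ I)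
    (ht : t ∉ p) (htI : ∀ f ∈ I, t * f ∈ J) (h : p ∈ associatedPrimes S (S ⧸ J)) :
    p ∈ associatedPrimes S (S ⧸ I) := by
  rw [AssociatedPrimes.mem_iff, isAssociatedPrime_iff] at h ⊢
  obtain ⟨hp, x, hx⟩ := h
  obtain ⟨g, rfl⟩ := Ideal.Quotient.mk_surjective x
  have hmem : ∀ (K : Ideal S) (g r : S),
      r ∈ (⊥ : Submodule S (S ⧸ K)).colon {Ideal.Quotient.mk K g} ↔ r * g ∈ K := by
    intro K g r
    rw [Submodule.mem_colon_singleton, Submodule.mem_bot, ← Ideal.Quotient.eq_zero_iff_mem,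
      map_mul]
    rfl
  have hpm : ∀ r, r ∈ p ↔ r * g ∈ J := fun r => by rw [← hmem J g r, ← hx]
  refine ⟨hp, Ideal.Quotient.mk I (s * g), ?_⟩
  ext r
  rw [hmem]
  constructor
  · intro hr
    have := hsJ _ ((hpm r).mp hr)
    rwa [mul_left_comm] at this
  · intro hr
    have h1 : (t * s * r) * g ∈ J := by
      convert htI _ hr using 1
      ring
    exact ((hp.mem_or_mem ((hpm _).mpr h1)).resolve_left (hp.mul_notMem ht hs))

lemma sub (I J : Ideal S)
    (h : ∀ p : Ideal S, p.IsPrime → ringKrullDim (S ⧸ p) = 2 →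
      (∃ s, s ∉ p ∧ ∀ f ∈ J, s * f ∈ I) ∧ (∃ s, s ∉ p ∧ ∀ f ∈ I, s * f ∈ J)) :
    CMpart I ⊆ CMpart J := by
  intro f hf p hp hass hdim
  obtain ⟨⟨s, hs, hsJ⟩, ⟨t, ht, htI⟩⟩ := h p hp hdim
  have h1 := (loc_iff I p hp f).mp (hf p hp (ass_of hs hsJ ht htI hass) hdim)
  obtain ⟨u, hu, huf⟩ := h1
  refine (loc_iff J p hp f).mpr ⟨t * u, hp.mul_notMem ht hu, ?_⟩
  rw [mul_assoc]
  exact htI _ huf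

end CMaux

/-- Let `S = ℂ[x,y,z,t]` and let `I, J ⊆ S` be homogeneous ideals with
`dim S/I = dim S/J = 2` (ideals of curves in `ℙ³`).  Suppose there is a Zariski-dense set
`L` of linear forms, each a nonzerodivisor on `S/I` and on `S/J`, such that for every
`ℓ ∈ L` the images of `I` and `J` modulo `ℓ` agree in all sufficiently high degrees.
Then `CM(I) = CM(J)`. -/
theorem stmt_12 (I J : Ideal (MvPolynomial (Fin 4) ℂ))
    (hIhom : ∀ f ∈ I, ∀ n : ℕ, homogeneousComponent n f ∈ I)
    (hJhom : ∀ f ∈ J, ∀ n : ℕ, homogeneousComponent n f ∈ J)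
    (hIdim : ringKrullDim (MvPolynomial (Fin 4) ℂ ⧸ I) = 2)
    (hJdim : ringKrullDim (MvPolynomial (Fin 4) ℂ ⧸ J) = 2)
    (L : Set (MvPolynomial (Fin 4) ℂ))
    (hL1 : ∀ ℓ ∈ L, ℓ ∈ homogeneousSubmodule (Fin 4) ℂ 1)
    (hLdense : ∀ p : MvPolynomial (Fin 4) ℂ,
      (∀ ℓ ∈ L, eval (fun i : Fin 4 => coeff (Finsupp.single i 1) ℓ) p = 0) → p = 0)
    (hLreg : ∀ ℓ ∈ L, (∀ g : MvPolynomial (Fin 4) ℂ, ℓ * g ∈ I → g ∈ I) ∧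
      (∀ g : MvPolynomial (Fin 4) ℂ, ℓ * g ∈ J → g ∈ J))
    (hLeq : ∀ ℓ ∈ L, ∃ N : ℕ, ∀ n : ℕ, N ≤ n →
      Submodule.restrictScalars ℂ (I ⊔ Ideal.span {ℓ}) ⊓
          homogeneousSubmodule (Fin 4) ℂ n =
        Submodule.restrictScalars ℂ (J ⊔ Ideal.span {ℓ}) ⊓
          homogeneousSubmodule (Fin 4) ℂ n) :
    CMpart I = CMpart J := by
  have h1 := CMaux.key I J hIhom hJhom L hL1 hLdense hLeq
  have h2 := CMaux.key J I hJhom hIhom L hL1 hLdense (fun ℓ hℓ => by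
    obtain ⟨N, hN⟩ := hLeq ℓ hℓ
    exact ⟨N, fun n hn => (hN n hn).symm⟩)
  exact Set.Subset.antisymm
    (CMaux.sub I J fun p hp hd => ⟨h1 p hp hd, h2 p hp hd⟩)
    (CMaux.sub J I fun p hp hd => ⟨h2 p hp hd, h1 p hp hd⟩)
end
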